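/- Let V be an ℓ × m real matrix with rows v₁,…,v_ℓ and columns v_{*1},…,v_{*m}, such that ‖v_i‖₂ = 1 for all i ∈ [ℓ]. Set α = max_{j ∈ [m]} |supp(v_{*j})| and β = max_{j ∈ [m]} ‖v_{*j}‖₂², and suppose 2·α·β·log(4ℓ) ≤ 1. Then for every μ ∈ ℝ^ℓ there exists a point w ∈ {0,1}^m such that ⟨w, v_i⟩ ≠ μ_i for every i ∈ [ℓ]; that is, the hyperplanes given by the rows of the system Vx = μ do not cover the entire m-cube {0,1}^m. -/

import Mathlib

/-!
The argument combines Bang's lemma with randomized rounding. Put `θ = 1 / (2√(αβ))`.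

Bang's lemma (`bang`) applied to the unit rows gives signs `ε i` such that the point
`x = θ ∑ i, ε i • v i` lies at signed distance at least `θ`, on the side `ε i`, from each
of the hyperplanes `⟨·, v i⟩ = μ i - ½ ∑ j, v i j`. By Cauchy–Schwarz on the support of a column,
`|x j| ≤ θ √(αβ) = ½` (`column_sum_le`), so `y = x + ½` lies in the solid cube and is at
distance at least `θ` from every hyperplane of the original system.

Rounding each `y j` independently to `0` or `1` with mean `y j` makes `⟨w - y, v i⟩` subgaussian
with parameter `¼ ‖v i‖² = ¼`, so the `i`-th hyperplane is hit with probability at most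
`exp (-2θ²) ≤ 1 / (4ℓ)`, and a union bound concludes. Since `ε i` records the side of the
hyperplane on which `y` lies, one-sided tails suffice. The rounding is carried out by the method of
conditional expectations (`exists_rounding`), so that Hoeffding's lemma is only needed for a
single two-point distribution (`hoeffding_two_point`).
-/

open Finset

/-- A point of the `m`-cube `{0,1}^m`. -/
def IsCubeVertex {m : ℕ} (x : Fin m → ℝ) : Prop := ∀ j, x j = 0 ∨ x j = 1

/-- Hoeffding's lemma for a Bernoulli variable with mean `p`. -/
lemma hoeffding_two_point {p : ℝ} (h0 : 0 ≤ p) (h1 : p ≤ 1) (t : ℝ) :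
    p * Real.exp (t * (1 - p)) + (1 - p) * Real.exp (t * (0 - p)) ≤ Real.exp (t ^ 2 / 8) := by
  open MeasureTheory ProbabilityTheory in
  let P : Measure ℝ := ENNReal.ofReal p • Measure.dirac 1 + ENNReal.ofReal (1 - p) • Measure.dirac 0
  have hP : IsProbabilityMeasure P := ⟨by
    simp only [P, Measure.add_apply, Measure.smul_apply, measure_univ, smul_eq_mul, mul_one]
    rw [← ENNReal.ofReal_add h0 (by linarith)]
    simp⟩
  have hint (f : ℝ → ℝ) : ∫ x, f x ∂P = p * f 1 + (1 - p) * f 0 := by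
    have hi (c : ℝ) (a : ℝ) : Integrable f (ENNReal.ofReal c • Measure.dirac a) :=
      (integrable_dirac (by simp)).smul_measure ENNReal.ofReal_ne_top
    simp only [P]
    rw [integral_add_measure (hi _ _) (hi _ _), integral_smul_measure, integral_smul_measure,
      integral_dirac, integral_dirac, ENNReal.toReal_ofReal h0,
      ENNReal.toReal_ofReal (by linarith)]
    simp
  have hmem : ∀ᵐ x ∂P, id x ∈ Set.Icc (0 : ℝ) 1 := by
    simp only [P, ae_add_measure_iff]
    constructor <;> refine Measure.ae_smul_measure ?_ _ <;> simp [ae_dirac_eq]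
  have h := (hasSubgaussianMGF_of_mem_Icc aemeasurable_id hmem).mgf_le t
  rw [mgf, hint, hint] at h
  refine le_trans (le_of_eq ?_) (h.trans (le_of_eq ?_))
  · simp
  · congr 1
    norm_num
    ring

/-- Derandomized rounding: if the coordinates of `w` are independent, `w j` being `0` or `1` with
mean `y j`, then each `exp (∑ j, (u i j * (w j - y j) - u i j ^ 2 / 8))` has mean at most `1`, hence
some outcome does not exceed the mean of the sum. The coordinates in `S` are chosen one at a
time; the weights `A i` hold the factors of the coordinates already chosen. -/
lemma exists_rounding {ℓ m : ℕ} (u : Fin ℓ → Fin m → ℝ) {y : Fin m → ℝ}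
    (hy : ∀ j, 0 ≤ y j ∧ y j ≤ 1) (S : Finset (Fin m)) :
    ∀ A : Fin ℓ → ℝ, (∀ i, 0 ≤ A i) → ∃ w : Fin m → ℝ, IsCubeVertex w ∧
      ∑ i, A i * Real.exp (∑ j ∈ S, (u i j * (w j - y j) - u i j ^ 2 / 8)) ≤ ∑ i, A i := by
  induction S using Finset.induction_on with
  | empty => exact fun A _ => ⟨0, fun _ => Or.inl rfl, by simp⟩
  | insert k S hk ih =>
    intro A hA
    let B (b : ℝ) (i : Fin ℓ) : ℝ := A i * Real.exp (u i k * (b - y k) - u i k ^ 2 / 8)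
    obtain ⟨h0, h1⟩ := hy k
    have havg : y k * ∑ i, B 1 i + (1 - y k) * ∑ i, B 0 i ≤ ∑ i, A i := by
      rw [Finset.mul_sum, Finset.mul_sum, ← Finset.sum_add_distrib]
      refine Finset.sum_le_sum fun i _ => ?_
      have h := mul_le_mul_of_nonneg_left (hoeffding_two_point h0 h1 (u i k))
        (div_nonneg (hA i) (Real.exp_pos (u i k ^ 2 / 8)).le)
      rw [div_mul_cancel₀ _ (Real.exp_pos _).ne'] at h
      refine le_trans (le_of_eq ?_) h
      simp only [B, Real.exp_sub]
      ring
    obtain ⟨b, hb, hB⟩ : ∃ b : ℝ, (b = 0 ∨ b = 1) ∧ ∑ i, B b i ≤ ∑ i, A i := by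
      by_contra! hcon
      have c0 := hcon 0 (Or.inl rfl)
      have c1 := hcon 1 (Or.inr rfl)
      rcases h0.eq_or_lt with h | h
      · rw [← h] at havg
        linarith
      · nlinarith [mul_lt_mul_of_pos_left c1 h,
          mul_le_mul_of_nonneg_left c0.le (sub_nonneg.2 h1)]
    obtain ⟨w, hw, hle⟩ := ih (B b) fun i => mul_nonneg (hA i) (Real.exp_pos _).le
    refine ⟨Function.update w k b, fun j => ?_, le_trans (le_of_eq ?_) (hle.trans hB)⟩
    · by_cases hj : j = k
      · subst hj
        simpa using hb
      · simpa [hj] using hw j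
    · refine Finset.sum_congr rfl fun i _ => ?_
      rw [Finset.sum_insert hk, Real.exp_add, ← mul_assoc]
      congr 2
      · simp
      · refine Finset.sum_congr rfl fun j hj => ?_
        rw [Function.update_of_ne (ne_of_mem_of_not_mem hj hk)]

/-- Bang's lemma for unit vectors. The signs maximize
`θ ‖∑ i, ε i • v i‖² - 2 ∑ i, ε i * μ i`; comparing with the value after flipping the sign `ε k` gives
the inequality for `k`. -/
lemma bang {ℓ m : ℕ} (v : Fin ℓ → Fin m → ℝ) (hv : ∀ i, ∑ j, v i j ^ 2 = 1) (θ : ℝ)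
    (μ : Fin ℓ → ℝ) :
    ∃ ε : Fin ℓ → ℝ, (∀ i, ε i ^ 2 = 1) ∧
      ∀ k, θ ≤ ε k * (∑ j, (θ * ∑ i, ε i * v i j) * v k j - μ k) := by
  let c (ε : Fin ℓ → ℤˣ) (i : Fin ℓ) : ℝ := ((ε i : ℤ) : ℝ)
  let F (ε : Fin ℓ → ℤˣ) : ℝ := θ * ∑ j, (∑ i, c ε i * v i j) ^ 2 - 2 * ∑ i, c ε i * μ i
  have hsq (ε : Fin ℓ → ℤˣ) (i : Fin ℓ) : c ε i ^ 2 = 1 := by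
    rcases Int.units_eq_one_or (ε i) with h | h <;> simp [c, h]
  obtain ⟨ε, hε⟩ := Finite.exists_max F
  refine ⟨c ε, hsq ε, fun k => ?_⟩
  have hflip (g : Fin ℓ → ℝ) : ∑ i, c (Function.update ε k (-ε k)) i * g i
      = ∑ i, c ε i * g i - 2 * c ε k * g k := by
    rw [← Finset.add_sum_erase _ _ (Finset.mem_univ k),
      ← Finset.add_sum_erase _ (fun i => c ε i * g i) (Finset.mem_univ k),
      Finset.sum_congr rfl (g := fun i => c ε i * g i)]
    · simp only [c, Function.update_self, Units.val_neg, Int.cast_neg]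
      ring
    · intro i hi
      simp only [c, Function.update_of_ne (Finset.ne_of_mem_erase hi)]
  have h := hε (Function.update ε k (-ε k))
  simp only [F] at h
  rw [hflip μ] at h
  have hexp : ∑ j, (∑ i, c (Function.update ε k (-ε k)) i * v i j) ^ 2
      = ∑ j, (∑ i, c ε i * v i j) ^ 2 - 4 * c ε k * ∑ j, (∑ i, c ε i * v i j) * v k j + 4 := by
    have hnorm : 4 * ∑ j, v k j ^ 2 = 4 := by rw [hv, mul_one]
    refine Eq.trans ?_ (congrArg (_ + ·) hnorm)
    rw [Finset.mul_sum, Finset.mul_sum, ← Finset.sum_sub_distrib, ← Finset.sum_add_distrib]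
    refine Finset.sum_congr rfl fun j _ => ?_
    rw [hflip fun i => v i j]
    linear_combination 4 * v k j ^ 2 * hsq ε k
  rw [hexp] at h
  have hθ : ∑ j, (θ * ∑ i, c ε i * v i j) * v k j
      = θ * ∑ j, (∑ i, c ε i * v i j) * v k j := by
    rw [Finset.mul_sum]
    exact Finset.sum_congr rfl fun j _ => by ring
  rw [hθ]
  linarith

/-- Cauchy–Schwarz on the support of `a`. -/
lemma column_sum_le {ℓ : ℕ} (a ε : Fin ℓ → ℝ) (hε : ∀ i, ε i ^ 2 = 1) {α β : ℝ}
    (hα : (({i : Fin ℓ | a i ≠ 0}.ncard : ℝ)) ≤ α) (hβ : ∑ i, a i ^ 2 ≤ β) :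
    (∑ i, ε i * a i) ^ 2 ≤ α * β := by
  classical
  have hs : ∑ i, ε i * a i = ∑ i ∈ univ.filter (fun i => a i ≠ 0), ε i * a i := by
    rw [Finset.sum_filter_of_ne]
    exact fun i _ h => right_ne_zero_of_mul h
  have hcard : ({i : Fin ℓ | a i ≠ 0}.ncard : ℝ) = #(univ.filter fun i => a i ≠ 0) := by
    rw [← Set.ncard_coe_finset]
    simp
  rw [hs]
  refine sq_sum_le_card_mul_sum_sq.trans ?_
  rw [← hcard]
  refine mul_le_mul hα (le_trans ?_ hβ) (Finset.sum_nonneg fun i _ => sq_nonneg _)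
    ((Nat.cast_nonneg _).trans hα)
  simp only [mul_pow, hε, one_mul]
  exact Finset.sum_le_univ_sum_of_nonneg fun i => sq_nonneg _

/-- Let `V` be an `ℓ × m` real matrix (with rows `v i` and columns `v_{*j}`) whose rows
have `ℓ₂`-norm `1`. If `α` bounds the support sizes of the columns, `β` bounds the squared
`ℓ₂`-norms of the columns (in particular this applies to the respective maxima `α`, `β`),
and `2αβ log(4ℓ) ≤ 1`, then for every `μ ∈ ℝ^ℓ` there is a point `w ∈ {0,1}^m` with
`⟨w, v i⟩ ≠ μ i` for every `i ∈ [ℓ]`: the hyperplanes of the system `Vx = μ` do not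
cover the entire `m`-cube. -/
theorem rows_do_not_cover_cube {ℓ m : ℕ} (v : Fin ℓ → Fin m → ℝ)
    (hrows : ∀ i, Real.sqrt (∑ j, v i j ^ 2) = 1) (α β : ℝ)
    (hα : ∀ j : Fin m, (({i : Fin ℓ | v i j ≠ 0}.ncard : ℝ)) ≤ α)
    (hβ : ∀ j : Fin m, ∑ i, v i j ^ 2 ≤ β)
    (hcond : 2 * α * β * Real.log (4 * ℓ) ≤ 1) (μ : Fin ℓ → ℝ) :
    ∃ w : Fin m → ℝ, IsCubeVertex w ∧ ∀ i, ∑ j, w j * v i j ≠ μ i := by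
  rcases Nat.eq_zero_or_pos ℓ with rfl | hℓ
  · exact ⟨0, fun _ => Or.inl rfl, fun i => i.elim0⟩
  have hv (i) : ∑ j, v i j ^ 2 = 1 := Real.sqrt_eq_one.1 (hrows i)
  -- A unit row has a nonzero entry, and the column of that entry shows `αβ > 0`.
  have hαβ : 0 < α * β := by
    let i₀ : Fin ℓ := ⟨0, hℓ⟩
    obtain ⟨j, -, hj⟩ : ∃ j ∈ univ, v i₀ j ^ 2 ≠ 0 :=
      Finset.exists_ne_zero_of_sum_ne_zero (by rw [hv]; norm_num)
    have hpos : 0 < v i₀ j ^ 2 := lt_of_le_of_ne (sq_nonneg _) hj.symm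
    refine mul_pos (lt_of_lt_of_le ?_ (hα j)) (lt_of_lt_of_le ?_ (hβ j))
    · rw [Nat.cast_pos, Set.ncard_pos]
      exact ⟨i₀, fun h => hj (by simp [h])⟩
    · exact hpos.trans_le (Finset.single_le_sum (f := fun i => v i j ^ 2)
        (fun i _ => sq_nonneg _) (Finset.mem_univ i₀))
  let θ : ℝ := 1 / (2 * Real.sqrt (α * β))
  have hθsq : θ ^ 2 * (α * β) = 1 / 4 := by
    have hs := Real.sq_sqrt hαβ.le
    simp only [θ, div_pow, mul_pow, hs]
    rw [div_mul_eq_mul_div, div_eq_div_iff (by positivity) (by norm_num)]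
    ring
  have hθ0 : 0 < θ := by
    have := Real.sqrt_pos.2 hαβ
    positivity
  have hlog : Real.log (4 * ℓ) ≤ 2 * θ ^ 2 := by
    refine le_of_mul_le_mul_left ?_ (mul_pos two_pos hαβ)
    linarith
  obtain ⟨ε, hε, hbang⟩ := bang v hv θ fun i => μ i - ∑ j, 1 / 2 * v i j
  let y (j : Fin m) : ℝ := 1 / 2 + θ * ∑ i, ε i * v i j
  have hy (j) : 0 ≤ y j ∧ y j ≤ 1 := by
    have h := mul_le_mul_of_nonneg_left (column_sum_le (fun i => v i j) ε hε (hα j) (hβ j))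
      (sq_nonneg θ)
    rw [hθsq, ← mul_pow] at h
    have := abs_le_of_sq_le_sq' (show (θ * ∑ i, ε i * v i j) ^ 2 ≤ (1 / 2) ^ 2 by linarith)
      (by norm_num)
    constructor <;> simp only [y] <;> linarith
  -- The parameter `4θ` minimizes the Chernoff exponent `s ^ 2 / 8 - s * θ`.
  obtain ⟨w, hw, hle⟩ := exists_rounding (fun i j => -(4 * θ * ε i) * v i j) hy univ
    (fun _ => 1) fun _ => zero_le_one
  refine ⟨w, hw, fun k hk => ?_⟩
  have hyk : ∑ j, y j * v k j
      = ∑ j, (θ * ∑ i, ε i * v i j) * v k j + ∑ j, 1 / 2 * v k j := by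
    rw [← Finset.sum_add_distrib]
    exact Finset.sum_congr rfl fun j _ => by simp only [y]; ring
  have hexp : ∑ j, (-(4 * θ * ε k) * v k j * (w j - y j) - (-(4 * θ * ε k) * v k j) ^ 2 / 8)
      = 4 * θ * (ε k * (∑ j, y j * v k j - μ k)) - 2 * θ ^ 2 := by
    calc _ = ∑ j, (4 * θ * ε k * (y j * v k j) - 4 * θ * ε k * (w j * v k j)
            - 2 * θ ^ 2 * ε k ^ 2 * v k j ^ 2) := Finset.sum_congr rfl fun j _ => by ring
      _ = _ := by
        rw [Finset.sum_sub_distrib, Finset.sum_sub_distrib, ← Finset.mul_sum, ← Finset.mul_sum,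
          ← Finset.mul_sum, hk, hv, hε]
        ring
  have hlow : 2 * θ ^ 2 ≤ 4 * θ * (ε k * (∑ j, y j * v k j - μ k)) - 2 * θ ^ 2 := by
    have h := hbang k
    rw [show ∑ j, (θ * ∑ i, ε i * v i j) * v k j - (μ k - ∑ j, 1 / 2 * v k j)
      = ∑ j, y j * v k j - μ k by rw [hyk]; ring] at h
    nlinarith [mul_le_mul_of_nonneg_left h hθ0.le]
  have hsingle := Finset.single_le_sum (f := fun i => (1 : ℝ) * Real.exp
    (∑ j, (-(4 * θ * ε i) * v i j * (w j - y j) - (-(4 * θ * ε i) * v i j) ^ 2 / 8)))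
    (fun i _ => by positivity) (Finset.mem_univ k)
  have htop := hsingle.trans hle
  simp only [one_mul, hexp, Finset.sum_const, Finset.card_univ, Fintype.card_fin,
    nsmul_eq_mul, mul_one] at htop
  have hℓ' : (0 : ℝ) < ℓ := Nat.cast_pos.2 hℓ
  have h4 : (4 * ℓ : ℝ) ≤ Real.exp (2 * θ ^ 2) :=
    (Real.log_le_iff_le_exp (by positivity)).1 hlog
  linarith [Real.exp_le_exp.2 hlow]
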